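/- Lax representation for the dual system in parabolic coordinates (with time change). Let x ≠ 0, H̃ = (p_x² + p_y²)/x, and for λ ≠ 0 define L̃(λ) = [[p_x + y·p_y/(2λ), λ − x − y²/(4λ)], [p_y²/λ + H̃, −(p_x + y·p_y/(2λ))]] and Ã = (1/x)·[[0,1],[0,0]]. Then for every λ ≠ 0 and every matrix entry (i,j), {H̃, L̃(λ)_{ij}} = ([Ã, L̃(λ)])_{ij}. -/

import Mathlib

/-- The canonical Poisson bracket of two functions of `(x, y, pₓ, p_y)` on `ℝ⁴`:
`{F,G} = ∂F/∂pₓ·∂G/∂x − ∂F/∂x·∂G/∂pₓ + ∂F/∂p_y·∂G/∂y − ∂F/∂y·∂G/∂p_y`. -/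
noncomputable def pb (F G : ℝ → ℝ → ℝ → ℝ → ℝ) (x y px py : ℝ) : ℝ :=
    deriv (fun s => F x y s py) px * deriv (fun s => G s y px py) x
  - deriv (fun s => F s y px py) x * deriv (fun s => G x y s py) px
  + deriv (fun s => F x y px s) py * deriv (fun s => G x s px py) y
  - deriv (fun s => F x s px py) y * deriv (fun s => G x y px s) py

/-- The dual Hamiltonian `H̃ = (pₓ² + p_y²)/x` obtained by the non-canonical
change of the time variable from the parabolic free system. -/
noncomputable def Ham : ℝ → ℝ → ℝ → ℝ → ℝ := fun x _ px py => (px ^ 2 + py ^ 2) / x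

/-- The dual Lax matrix in parabolic coordinates: the parabolic Lax matrix with
`H̃` added to the lower-left entry. -/
noncomputable def L (lam x y px py : ℝ) : Matrix (Fin 2) (Fin 2) ℝ :=
  !![px + y * py / (2 * lam), lam - x - y ^ 2 / (4 * lam);
     py ^ 2 / lam + Ham x y px py, -(px + y * py / (2 * lam))]

/-- The constant part of the second Lax matrix; the second Lax matrix is
`Ã = (1/x) • A`. -/
noncomputable def A : Matrix (Fin 2) (Fin 2) ℝ := !![0, 1; 0, 0]

/-!
Write `H̃ = vH` with `H = pₓ² + p_y²` and `v = 1/x`, and `L̃ = L + H̃ N`, where `L` is the Lax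
matrix of the parabolic free system and `N` is the lower-left matrix unit. Since `{H̃, H̃} = 0`, the
perturbation does not contribute to the bracket, so the Leibniz rule gives
`{H̃, L̃} = v {H, L} + H {v, L}`. The free system satisfies `{H, L} = [A, L]`, and
`{v, L} = v² ∂L/∂pₓ = v² [A, N]`. Hence `{H̃, L̃} = v [A, L] + v H̃ [A, N] = [vA, L̃]`.
-/

section PoissonBracket

/-- Differentiability of an observable in each canonical variable separately, which is all that
the coordinate expression `pb` sees. -/
structure PartiallyDifferentiableAt (F : ℝ → ℝ → ℝ → ℝ → ℝ) (x y px py : ℝ) : Prop where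
  wrt_x : DifferentiableAt ℝ (fun s => F s y px py) x
  wrt_y : DifferentiableAt ℝ (fun s => F x s px py) y
  wrt_px : DifferentiableAt ℝ (fun s => F x y s py) px
  wrt_py : DifferentiableAt ℝ (fun s => F x y px s) py

variable {F G K : ℝ → ℝ → ℝ → ℝ → ℝ} {x y px py : ℝ}

theorem PartiallyDifferentiableAt.mul (hF : PartiallyDifferentiableAt F x y px py)
    (hG : PartiallyDifferentiableAt G x y px py) :
    PartiallyDifferentiableAt (F * G) x y px py :=
  ⟨hF.wrt_x.mul hG.wrt_x, hF.wrt_y.mul hG.wrt_y, hF.wrt_px.mul hG.wrt_px,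
    hF.wrt_py.mul hG.wrt_py⟩

theorem PartiallyDifferentiableAt.mul_const (hF : PartiallyDifferentiableAt F x y px py) (c : ℝ) :
    PartiallyDifferentiableAt (fun x y px py => F x y px py * c) x y px py :=
  ⟨hF.wrt_x.mul_const c, hF.wrt_y.mul_const c, hF.wrt_px.mul_const c,
    hF.wrt_py.mul_const c⟩

theorem pb_self (F : ℝ → ℝ → ℝ → ℝ → ℝ) (x y px py : ℝ) : pb F F x y px py = 0 := by
  unfold pb
  ring

theorem pb_mul_left (hF : PartiallyDifferentiableAt F x y px py)
    (hG : PartiallyDifferentiableAt G x y px py) (K : ℝ → ℝ → ℝ → ℝ → ℝ) :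
    pb (F * G) K x y px py = F x y px py * pb G K x y px py + G x y px py * pb F K x y px py := by
  simp only [pb, Pi.mul_apply, deriv_fun_mul hF.wrt_x hG.wrt_x, deriv_fun_mul hF.wrt_y hG.wrt_y,
    deriv_fun_mul hF.wrt_px hG.wrt_px, deriv_fun_mul hF.wrt_py hG.wrt_py]
  ring

theorem pb_add_right (F : ℝ → ℝ → ℝ → ℝ → ℝ) (hG : PartiallyDifferentiableAt G x y px py)
    (hK : PartiallyDifferentiableAt K x y px py) :
    pb F (fun x y px py => G x y px py + K x y px py) x y px py =
      pb F G x y px py + pb F K x y px py := by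
  simp only [pb, deriv_fun_add hG.wrt_x hK.wrt_x, deriv_fun_add hG.wrt_y hK.wrt_y,
    deriv_fun_add hG.wrt_px hK.wrt_px, deriv_fun_add hG.wrt_py hK.wrt_py]
  ring

theorem pb_mul_const_right (F G : ℝ → ℝ → ℝ → ℝ → ℝ) (c x y px py : ℝ) :
    pb F (fun x y px py => G x y px py * c) x y px py = pb F G x y px py * c := by
  simp only [pb, deriv_mul_const_field]
  ring

theorem pb_position_left (v : ℝ → ℝ → ℝ) (G : ℝ → ℝ → ℝ → ℝ → ℝ) (x y px py : ℝ) :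
    pb (fun x y _ _ => v x y) G x y px py =
      -(deriv (fun s => v s y) x * deriv (fun s => G x y s py) px
        + deriv (fun s => v x s) y * deriv (fun s => G x y px s) py) := by
  simp only [pb, deriv_const]
  ring

end PoissonBracket

section TimeChange

variable {n : Type*} {H v : ℝ → ℝ → ℝ → ℝ → ℝ} {M : ℝ → ℝ → ℝ → ℝ → Matrix n n ℝ}
  {x y px py : ℝ}

/-- The Poisson bracket `{F, M}` of an observable with a matrix-valued observable, taken entry by
entry as in a Lax equation. -/
noncomputable def matrixPb (F : ℝ → ℝ → ℝ → ℝ → ℝ) (M : ℝ → ℝ → ℝ → ℝ → Matrix n n ℝ)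
    (x y px py : ℝ) : Matrix n n ℝ :=
  Matrix.of fun i j => pb F (fun x y px py => M x y px py i j) x y px py

theorem matrixPb_mul_left (hv : PartiallyDifferentiableAt v x y px py)
    (hH : PartiallyDifferentiableAt H x y px py) (M : ℝ → ℝ → ℝ → ℝ → Matrix n n ℝ) :
    matrixPb (v * H) M x y px py =
      v x y px py • matrixPb H M x y px py + H x y px py • matrixPb v M x y px py :=
  Matrix.ext fun i j => pb_mul_left hv hH fun x y px py => M x y px py i j

theorem matrixPb_add_self_smul (hH : PartiallyDifferentiableAt H x y px py)
    (hM : ∀ i j, PartiallyDifferentiableAt (fun x y px py => M x y px py i j) x y px py)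
    (N : Matrix n n ℝ) :
    matrixPb H (fun x y px py => M x y px py + H x y px py • N) x y px py =
      matrixPb H M x y px py := by
  ext i j
  calc pb H (fun x y px py => M x y px py i j + H x y px py * N i j) x y px py
      = pb H (fun x y px py => M x y px py i j) x y px py + pb H H x y px py * N i j := by
        rw [pb_add_right H (hM i j) (hH.mul_const _), pb_mul_const_right]
    _ = pb H (fun x y px py => M x y px py i j) x y px py := by
        rw [pb_self, zero_mul, add_zero]

theorem matrixPb_eq_lie_of_timeChange [Fintype n] {A N : Matrix n n ℝ}
    (hv : PartiallyDifferentiableAt v x y px py) (hH : PartiallyDifferentiableAt H x y px py)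
    (hM : ∀ i j, PartiallyDifferentiableAt (fun x y px py => M x y px py i j) x y px py)
    (lax : matrixPb H M x y px py = ⁅A, M x y px py⁆)
    (compat : matrixPb v M x y px py = v x y px py ^ 2 • ⁅A, N⁆) :
    matrixPb (v * H) (fun x y px py => M x y px py + (v * H) x y px py • N) x y px py =
      ⁅v x y px py • A, M x y px py + (v * H) x y px py • N⁆ := by
  rw [matrixPb_add_self_smul (hv.mul hH) hM, matrixPb_mul_left hv hH, lax, compat]
  simp only [Ring.lie_def, Pi.mul_apply, mul_add, add_mul, Matrix.smul_mul, Matrix.mul_smul]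
  module

end TimeChange

section Parabolic

/-- The Hamiltonian `H = pₓ² + p_y²` of the parabolic free system. -/
def freeHam : ℝ → ℝ → ℝ → ℝ → ℝ := fun _ _ px py => px ^ 2 + py ^ 2

/-- The Lax matrix of the parabolic free system, before the change of time. -/
noncomputable def parabolicLax (lam x y px py : ℝ) : Matrix (Fin 2) (Fin 2) ℝ :=
  !![px + y * py / (2 * lam), lam - x - y ^ 2 / (4 * lam);
     py ^ 2 / lam, -(px + y * py / (2 * lam))]

theorem Ham_eq_inv_mul_freeHam : Ham = (fun x _ _ _ => x⁻¹) * freeHam := by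
  funext x y px py
  exact div_eq_inv_mul _ _

theorem L_eq_parabolicLax_add (lam : ℝ) :
    L lam = fun x y px py => parabolicLax lam x y px py + Ham x y px py • !![0, 0; 1, 0] := by
  ext x y px py : 4
  simp [L, parabolicLax]

theorem A_lie_fin_two_of (a b c d : ℝ) : ⁅A, !![a, b; c, d]⁆ = !![c, d - a; 0, -c] := by
  simp [A, Ring.lie_def]

theorem partiallyDifferentiableAt_freeHam (x y px py : ℝ) :
    PartiallyDifferentiableAt freeHam x y px py := by
  unfold freeHam
  constructor <;> fun_prop

theorem partiallyDifferentiableAt_inv {x : ℝ} (hx : x ≠ 0) (y px py : ℝ) :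
    PartiallyDifferentiableAt (fun x _ _ _ => x⁻¹) x y px py := by
  constructor <;> fun_prop (disch := assumption)

theorem partiallyDifferentiableAt_parabolicLax (lam x y px py : ℝ) : ∀ i j,
    PartiallyDifferentiableAt (fun x y px py => parabolicLax lam x y px py i j) x y px py := by
  simp only [Fin.forall_fin_two, parabolicLax, Matrix.of_apply, Matrix.cons_val]
  refine ⟨⟨?_, ?_⟩, ?_, ?_⟩ <;> constructor <;> fun_prop

theorem deriv_parabolicLax_x (lam x y px py : ℝ) (i j : Fin 2) :
    deriv (fun s => parabolicLax lam s y px py i j) x =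
      (!![0, -1; 0, 0] : Matrix (Fin 2) (Fin 2) ℝ) i j := by
  fin_cases i <;> fin_cases j <;> simp [parabolicLax]

theorem deriv_parabolicLax_y (lam x y px py : ℝ) (i j : Fin 2) :
    deriv (fun s => parabolicLax lam x s px py i j) y =
      !![py / (2 * lam), -(2 * y / (4 * lam)); 0, -(py / (2 * lam))] i j := by
  fin_cases i <;> fin_cases j <;> simp [parabolicLax]

theorem deriv_parabolicLax_px (lam x y px py : ℝ) (i j : Fin 2) :
    deriv (fun s => parabolicLax lam x y s py i j) px =
      (!![1, 0; 0, -1] : Matrix (Fin 2) (Fin 2) ℝ) i j := by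
  fin_cases i <;> fin_cases j <;> simp [parabolicLax]

theorem pb_freeHam (G : ℝ → ℝ → ℝ → ℝ → ℝ) (x y px py : ℝ) :
    pb freeHam G x y px py =
      2 * px * deriv (fun s => G s y px py) x + 2 * py * deriv (fun s => G x s px py) y := by
  simp [pb, freeHam]

theorem matrixPb_freeHam_parabolicLax (lam x y px py : ℝ) :
    matrixPb freeHam (parabolicLax lam) x y px py = ⁅A, parabolicLax lam x y px py⁆ := by
  rw [parabolicLax, A_lie_fin_two_of, ← Matrix.ext_iff]
  simp only [matrixPb, Matrix.of_apply, pb_freeHam, deriv_parabolicLax_x, deriv_parabolicLax_y,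
    Fin.forall_fin_two, Matrix.cons_val]
  refine ⟨⟨?_, ?_⟩, ?_, ?_⟩ <;> ring

theorem matrixPb_inv_parabolicLax (lam x y px py : ℝ) :
    matrixPb (fun x _ _ _ => x⁻¹) (parabolicLax lam) x y px py =
      x⁻¹ ^ 2 • ⁅A, !![0, 0; 1, 0]⁆ := by
  rw [A_lie_fin_two_of]
  ext i j
  simp [matrixPb, pb_position_left (fun x _ => x⁻¹), deriv_parabolicLax_px]

end Parabolic

/-- Lax representation for the dual system in parabolic coordinates (with time
change): the Lax equation `{H̃, L̃(λ)} = [(1/x) • A, L̃(λ)]` holds entrywise for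
`x ≠ 0` and `λ ≠ 0`. -/
theorem lax_dual_parabolic :
    ∀ (lam x y px py : ℝ), x ≠ 0 → lam ≠ 0 → ∀ (i j : Fin 2),
      pb Ham (fun x y px py => L lam x y px py i j) x y px py =
        (((1 / x) • A) * L lam x y px py - L lam x y px py * ((1 / x) • A)) i j := by
  intro lam x y px py hx _ i j
  have lax : matrixPb Ham (L lam) x y px py = ⁅(1 / x) • A, L lam x y px py⁆ := by
    rw [L_eq_parabolicLax_add, Ham_eq_inv_mul_freeHam, one_div]
    exact matrixPb_eq_lie_of_timeChange (partiallyDifferentiableAt_inv hx y px py)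
      (partiallyDifferentiableAt_freeHam x y px py)
      (partiallyDifferentiableAt_parabolicLax lam x y px py)
      (matrixPb_freeHam_parabolicLax lam x y px py) (matrixPb_inv_parabolicLax lam x y px py)
  exact congr_fun₂ lax i j
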